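/- (Corollary on single-letter cost bound) In the setting of Theorem 3, assume additionally that the dual resource norms satisfy ‖Y^{⊗n}‖_μ° ≤ (‖Y‖_μ°)^n for every Y ∈ T_sa(H_A) and every n ≥ 1. Then any achievable dilution rate C > 0 (witnessed by trace-norm- and resource-norm-contracting maps Λ_n with (1/2)‖Λ_n(φ^{⊗⌈Cn⌉}) − ρ^{⊗n}‖₁ → 0) satisfies C · limsup_{m→∞} (1/m) log₂ ‖φ^{⊗m}‖_μ ≥ inf{D_ħ^0(ρ‖Z) : Z ∈ T_sa(H_A), ‖Z‖_μ ≤ 1}, where the right-hand side is the single-copy quantity. -/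

import Mathlib

/-! The bound comes from regularising a single-copy test. If `Q` satisfies `-1 ≤ Q ≤ 1` and
`⟨Q, ρ⟩ ≥ 1`, then `Q^{⊗n}` satisfies the same constraints for `ρ^{⊗n}` (`loew_tpow`, `hip_tpow`), and
`‖Q^{⊗n}‖° ≤ (‖Q‖°)^n` by assumption. Evaluating `Q^{⊗n}` on `Λₙ(φ^{⊗⌈Cn⌉})`, which is close to
`ρ^{⊗n}` in trace norm, gives
`1 - ‖Λₙ(φ^{⊗⌈Cn⌉}) - ρ^{⊗n}‖₁ ≤ (‖Q‖°)^n ‖φ^{⊗⌈Cn⌉}‖` (`one_sub_le`), so that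
`-log₂ ‖Q‖° ≤ C · limsup (1/m) log₂ ‖φ^{⊗m}‖` for every such `Q` (`rate_bound`).

It remains to identify the infimum over `Z` of `D_ħ^0(ρ‖Z)` with the supremum of `-log₂ ‖Q‖°` over
tests `Q`. Only one inequality is used: if all tests have dual norm at least `2^{-t}`, then a
Hahn–Banach separation in the dual space, together with reflexivity in finite dimension, produces one
`Z` in the unit ball with `⟨Q, Z⟩ ≥ 2^{-t}` for all tests (`minimax`, `iInf_DEmanc_le`). Neither
compactness of the set of tests nor existence of an optimal test is needed. -/

open scoped ComplexOrder
open Filter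

noncomputable section

/-- The real vector space of self-adjoint (Hermitian) operators on `ℂ^ι`. -/
abbrev HMat (ι : Type) [Fintype ι] [DecidableEq ι] : Type :=
  selfAdjoint (Matrix ι ι ℂ)

variable {ι κ : Type} [Fintype ι] [DecidableEq ι] [Fintype κ] [DecidableEq κ]

/-- The matrix underlying a self-adjoint operator is Hermitian. -/
def herm (X : HMat ι) : X.1.IsHermitian := X.2

/-- The (real) Hilbert–Schmidt inner product `⟨Q, X⟩ = Tr (Q X)`. -/
def hip (Q X : HMat ι) : ℝ := (Matrix.trace (Q.1 * X.1)).re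

/-- The trace norm of a self-adjoint operator: the sum of absolute values of eigenvalues. -/
def trNorm (X : HMat ι) : ℝ := ∑ i, |(herm X).eigenvalues i|

/-- The operator norm of a self-adjoint operator: the largest absolute value of an eigenvalue. -/
def opNorm (X : HMat ι) : ℝ := ⨆ i, |(herm X).eigenvalues i|

/-- A state: a positive semidefinite operator of unit trace. -/
def IsState (ρ : HMat ι) : Prop := ρ.1.PosSemidef ∧ Matrix.trace ρ.1 = 1

/-- A pure state: a rank-one orthogonal projection. -/
def IsPureState (φ : HMat ι) : Prop := IsState φ ∧ φ.1 * φ.1 = φ.1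

/-- A norm-like function on self-adjoint operators. -/
structure MatNorm (ι : Type) [Fintype ι] [DecidableEq ι] where
  toFun : HMat ι → ℝ
  eq_zero' : ∀ X, toFun X = 0 → X = 0
  smul' : ∀ (t : ℝ) (X), toFun (t • X) = |t| * toFun X
  add_le' : ∀ X Y, toFun (X + Y) ≤ toFun X + toFun Y

/-- A resource norm: a norm with `‖ρ‖ ≥ 1` on every state. -/
structure ResourceNorm (ι : Type) [Fintype ι] [DecidableEq ι] extends MatNorm ι where
  one_le_state' : ∀ ρ, IsState ρ → 1 ≤ toFun ρ

/-- The dual norm `‖Q‖° = sup {⟨Q, X⟩ : ‖X‖ ≤ 1}`. -/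
def dualNormF (ν : HMat ι → ℝ) (Q : HMat ι) : ℝ :=
  sSup {r | ∃ X, ν X ≤ 1 ∧ r = hip Q X}

/-- Membership in the class `O_μ` of maps contracting the trace norm and the resource norms. -/
def MemO (νi : ResourceNorm ι) (νo : ResourceNorm κ) (Λ : HMat ι →ₗ[ℝ] HMat κ) : Prop :=
  (∀ X, trNorm (Λ X) ≤ trNorm X) ∧ (∀ X, νo.toFun (Λ X) ≤ νi.toFun X)

/-- The trace-norm ε-ball around a state. -/
def ball (ρ : HMat ι) (ε : ℝ) : Set (HMat ι) :=
  {X | trNorm X ≤ 1 ∧ trNorm (X - ρ) ≤ ε}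

/-- Loewner order: `A ≤ B` iff `B - A` is positive semidefinite. -/
def loew (A B : Matrix ι ι ℂ) : Prop := (B - A).PosSemidef

/-- The feasible values `⟨Q, Z⟩` entering the emancipated hypothesis testing quantity. -/
def dhSet (ρ Z : HMat ι) (ε : ℝ) : Set ℝ :=
  {r | ∃ Q : HMat ι, loew (-(1 : Matrix ι ι ℂ)) Q.1 ∧ loew Q.1 1 ∧
        1 - ε ≤ hip Q ρ ∧ r = hip Q Z}

/-- The non-logarithmic emancipated hypothesis testing quantity `d_ħ^ε(ρ‖Z)`,
with value `+∞` when the infimum is `≤ 0`. -/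
def dEmanc (ρ Z : HMat ι) (ε : ℝ) : EReal :=
  if 0 < sInf (dhSet ρ Z ε) then (((sInf (dhSet ρ Z ε))⁻¹ : ℝ) : EReal) else ⊤

/-- The emancipated hypothesis testing relative entropy `D_ħ^ε(ρ‖Z)` (base-2 logarithmic form),
with value `+∞` when the infimum is `≤ 0`. -/
def DEmanc (ρ Z : HMat ι) (ε : ℝ) : EReal :=
  if 0 < sInf (dhSet ρ Z ε) then ((-Real.logb 2 (sInf (dhSet ρ Z ε)) : ℝ) : EReal) else ⊤


/-- The `n`-fold tensor (Kronecker) power of a self-adjoint operator. -/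
def tpow {d : ℕ} (A : HMat (Fin d)) (n : ℕ) : HMat (Fin n → Fin d) :=
  ⟨Matrix.of fun i j => ∏ k, A.1 (i k) (j k), by
    refine Matrix.IsHermitian.isSelfAdjoint ?_
    refine Matrix.IsHermitian.ext fun i j => ?_
    simp only [Matrix.of_apply]
    rw [star_prod]
    exact Finset.prod_congr rfl fun k _ => (herm A).apply (i k) (j k)⟩

/-- Combining operators on `m` and `n` copies into one on `m + n` copies (tensor product). -/
def kron {d m n : ℕ} (Y : HMat (Fin m → Fin d)) (Z : HMat (Fin n → Fin d)) :
    HMat (Fin (m + n) → Fin d) :=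
  ⟨Matrix.of fun i j =>
      Y.1 (fun k => i (Fin.castAdd n k)) (fun k => j (Fin.castAdd n k)) *
        Z.1 (fun k => i (Fin.natAdd m k)) (fun k => j (Fin.natAdd m k)), by
    refine Matrix.IsHermitian.isSelfAdjoint ?_
    refine Matrix.IsHermitian.ext fun i j => ?_
    simp only [Matrix.of_apply, star_mul']
    rw [(herm Y).apply, (herm Z).apply]⟩

/-! ### Norms on finite-dimensional real spaces and the minimax step -/

theorem norm_fn_nonneg {E : Type} [AddCommGroup E] [Module ℝ E] (p : E → ℝ)
    (hs : ∀ (t : ℝ) x, p (t • x) = |t| * p x) (ha : ∀ x y, p (x + y) ≤ p x + p y) :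
    p 0 = 0 ∧ ∀ x, 0 ≤ p x := by
  have hz : p 0 = 0 := by simpa using hs 0 0
  refine ⟨hz, fun x => ?_⟩
  have h1 := ha x ((-1 : ℝ) • x)
  rw [hs] at h1
  simp only [neg_smul, one_smul, add_neg_cancel, hz, abs_neg, abs_one, one_mul] at h1
  linarith

/-- Linear functionals on a finite-dimensional space are bounded for any norm `p`. This makes the
supremum defining `dualNormF` a genuine one. -/
theorem exists_bound {E : Type} [AddCommGroup E] [Module ℝ E] [FiniteDimensional ℝ E]
    (p : E → ℝ) (h0 : ∀ x, p x = 0 → x = 0) (hs : ∀ (t : ℝ) x, p (t • x) = |t| * p x)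
    (ha : ∀ x y, p (x + y) ≤ p x + p y) (f : E →ₗ[ℝ] ℝ) :
    ∃ c, ∀ x, f x ≤ c * p x := by
  obtain ⟨hz, hn⟩ := norm_fn_nonneg p hs ha
  let _ : Norm E := ⟨p⟩
  have core : NormedSpace.Core ℝ E :=
    { norm_nonneg := hn, norm_smul := hs, norm_triangle := ha,
      norm_eq_zero_iff := fun x => ⟨h0 x, fun h => h ▸ hz⟩ }
  let _ : NormedAddCommGroup E := NormedAddCommGroup.ofCore core
  let _ : NormedSpace ℝ E := NormedSpace.ofCore core
  let F : E →L[ℝ] ℝ := LinearMap.toContinuousLinearMap f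
  exact ⟨‖F‖, fun x => (le_abs_self _).trans (F.le_opNorm x)⟩

/-- Minimax for the bilinear pairing of a convex set `K` of functionals with the unit ball of a
norm `p`: if every `f ∈ K` has dual norm at least `D`, then one point `Z` of the unit ball satisfies
`f Z ≥ D` for all `f ∈ K` simultaneously. The set `K` is separated from the open dual ball of radius
`D`, and the separating functional on the dual is evaluation at a point by reflexivity. -/
theorem minimax {E : Type} [AddCommGroup E] [Module ℝ E] [FiniteDimensional ℝ E]
    (p : E → ℝ) (h0 : ∀ x, p x = 0 → x = 0) (hs : ∀ (t : ℝ) x, p (t • x) = |t| * p x)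
    (ha : ∀ x y, p (x + y) ≤ p x + p y) (K : Set (E →ₗ[ℝ] ℝ)) (hK : Convex ℝ K)
    (hKn : K.Nonempty) (D : ℝ) (hD : 0 < D)
    (hKD : ∀ f ∈ K, ∀ c, (∀ x, p x ≤ 1 → f x ≤ c) → D ≤ c) :
    ∃ Z, p Z ≤ 1 ∧ ∀ f ∈ K, D ≤ f Z := by
  obtain ⟨hz, hn⟩ := norm_fn_nonneg p hs ha
  let _ : Norm E := ⟨p⟩
  have core : NormedSpace.Core ℝ E :=
    { norm_nonneg := hn, norm_smul := hs, norm_triangle := ha,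
      norm_eq_zero_iff := fun x => ⟨h0 x, fun h => h ▸ hz⟩ }
  let _ : NormedAddCommGroup E := NormedAddCommGroup.ofCore core
  let _ : NormedSpace ℝ E := NormedSpace.ofCore core
  let e : (E →ₗ[ℝ] ℝ) ≃ₗ[ℝ] (E →L[ℝ] ℝ) := LinearMap.toContinuousLinearMap
  have hK' : Convex ℝ (e '' K) := hK.is_linear_image e.toLinearMap.isLinear
  have hdisj : Disjoint (Metric.ball (0 : E →L[ℝ] ℝ) D) (e '' K) := by
    rw [Set.disjoint_left]
    rintro _ hb ⟨f, hf, rfl⟩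
    have h1 : ‖e f‖ < D := by simpa using hb
    refine absurd (hKD f hf ‖e f‖ fun x hx => ?_) (not_le.2 h1)
    exact (le_abs_self _).trans ((e f).unit_le_opNorm x hx)
  obtain ⟨g, u, hg1, hg2⟩ := geometric_hahn_banach_open (convex_ball _ _) Metric.isOpen_ball
    hK' hdisj
  -- the closed ball of radius `D` is the closure of the open one
  have hg3 : ∀ f : E →L[ℝ] ℝ, ‖f‖ ≤ D → g f ≤ u := by
    intro f hf
    have hcl : f ∈ closure (Metric.ball (0 : E →L[ℝ] ℝ) D) := by
      rw [closure_ball _ hD.ne']; simpa using hf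
    exact closure_minimal (fun a ha => (hg1 a ha).le)
      (isClosed_le g.continuous continuous_const) hcl
  have hu : 0 < u := by simpa using hg1 0 (by simpa using hD)
  have hgn : D * ‖g‖ ≤ u := by
    rw [mul_comm, ← le_div_iff₀ hD]
    refine g.opNorm_le_of_unit_norm (by positivity) fun f hf => ?_
    rw [le_div_iff₀ hD, Real.norm_eq_abs, ← abs_of_pos hD, ← abs_mul, abs_le]
    have ha1 := hg3 (D • f) (by rw [norm_smul, hf]; simp [abs_of_pos hD])
    have ha2 := hg3 (-(D • f)) (by rw [norm_neg, norm_smul, hf]; simp [abs_of_pos hD])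
    simp only [map_neg, map_smul, smul_eq_mul] at ha1 ha2
    constructor <;> linarith
  have hg0 : 0 < ‖g‖ := by
    by_contra hneg
    obtain ⟨f, hf⟩ := hKn
    have h1 := hg2 (e f) ⟨f, hf, rfl⟩
    have h2 : g (e f) ≤ ‖g‖ * ‖e f‖ := (le_abs_self _).trans (g.le_opNorm _)
    have h3 : ‖g‖ * ‖e f‖ ≤ 0 :=
      mul_nonpos_of_nonpos_of_nonneg (not_lt.1 hneg) (norm_nonneg _)
    linarith
  -- reflexivity of finite-dimensional spaces
  obtain ⟨z, hz⟩ : ∃ z : E, NormedSpace.inclusionInDoubleDual ℝ E z = g := by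
    have hinj : Function.Injective (NormedSpace.inclusionInDoubleDual ℝ E) :=
      (NormedSpace.inclusionInDoubleDualLi ℝ (E := E)).injective
    have hdim : Module.finrank ℝ E = Module.finrank ℝ (StrongDual ℝ (StrongDual ℝ E)) := by
      have h1 : ∀ (V : Type) [NormedAddCommGroup V] [NormedSpace ℝ V] [FiniteDimensional ℝ V],
          Module.finrank ℝ V = Module.finrank ℝ (StrongDual ℝ V) := fun V _ _ _ => by
        rw [← (LinearMap.toContinuousLinearMap : (V →ₗ[ℝ] ℝ) ≃ₗ[ℝ] (V →L[ℝ] ℝ)).finrank_eq]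
        exact (Subspace.dual_finrank_eq (K := ℝ) (V := V)).symm
      rw [h1 E, h1 (StrongDual ℝ E)]
    exact (LinearMap.injective_iff_surjective_of_finrank_eq_finrank
      (f := (NormedSpace.inclusionInDoubleDual ℝ E).toLinearMap) hdim).1 hinj g
  have hzn : ‖z‖ = ‖g‖ := by
    rw [← hz]; exact ((NormedSpace.inclusionInDoubleDualLi ℝ (E := E)).norm_map z).symm
  refine ⟨‖g‖⁻¹ • z, ?_, fun f hf => ?_⟩
  · change ‖‖g‖⁻¹ • z‖ ≤ 1
    rw [norm_smul, hzn, norm_inv, norm_norm, inv_mul_cancel₀ hg0.ne']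
  · have h1 := hg2 (e f) ⟨f, hf, rfl⟩
    rw [← hz, NormedSpace.dual_def] at h1
    change u ≤ f z at h1
    rw [map_smul, smul_eq_mul, inv_mul_eq_div, le_div_iff₀ hg0]
    linarith

/-! ### Tensor powers -/

/-- The `n`-fold Kronecker power of an arbitrary, not necessarily Hermitian, matrix, so that the
power of a spectral decomposition can be taken factor by factor. -/
def tpM {d : ℕ} (A : Matrix (Fin d) (Fin d) ℂ) (n : ℕ) :
    Matrix (Fin n → Fin d) (Fin n → Fin d) ℂ :=
  Matrix.of fun i j => ∏ k, A (i k) (j k)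

theorem tpM_mul {d : ℕ} (A B : Matrix (Fin d) (Fin d) ℂ) (n : ℕ) :
    tpM (A * B) n = tpM A n * tpM B n := by
  ext i j
  simp only [tpM, Matrix.of_apply, Matrix.mul_apply, Fintype.prod_sum, Finset.prod_mul_distrib]

theorem tpM_diagonal {d : ℕ} (a : Fin d → ℂ) (n : ℕ) :
    tpM (Matrix.diagonal a) n = Matrix.diagonal fun i => ∏ k, a (i k) := by
  ext i j
  simp only [tpM, Matrix.of_apply, Matrix.diagonal_apply]
  split_ifs with h
  · simp [h]
  · obtain ⟨k, hk⟩ := Function.ne_iff.1 h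
    exact Finset.prod_eq_zero (Finset.mem_univ k) (by simp [hk])

theorem tpM_one {d : ℕ} (n : ℕ) : tpM (1 : Matrix (Fin d) (Fin d) ℂ) n = 1 := by
  rw [← Matrix.diagonal_one, tpM_diagonal]
  simp

theorem tpM_star {d : ℕ} (A : Matrix (Fin d) (Fin d) ℂ) (n : ℕ) :
    tpM (star A) n = star (tpM A n) := by
  ext i j
  simp [tpM, Matrix.star_apply]

theorem tpM_trace {d : ℕ} (A : Matrix (Fin d) (Fin d) ℂ) (n : ℕ) :
    (tpM A n).trace = A.trace ^ n := by
  simp only [Matrix.trace, tpM, Matrix.diag_apply, Matrix.of_apply]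
  rw [← Fintype.prod_sum (fun (_ : Fin n) i => A i i)]
  simp

theorem tpow_val {d : ℕ} (A : HMat (Fin d)) (n : ℕ) : (tpow A n).1 = tpM A.1 n := rfl

theorem trace_mul_re {ι : Type} [Fintype ι] [DecidableEq ι] (Q X : HMat ι) :
    Matrix.trace (Q.1 * X.1) = ((hip Q X : ℝ) : ℂ) := by
  symm
  apply Complex.conj_eq_iff_re.1
  rw [starRingEnd_apply, ← Matrix.trace_conjTranspose, Matrix.conjTranspose_mul,
    (herm Q).eq, (herm X).eq, Matrix.trace_mul_comm]

theorem hip_tpow {d : ℕ} (Y X : HMat (Fin d)) (n : ℕ) :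
    hip (tpow Y n) (tpow X n) = hip Y X ^ n := by
  have h : Matrix.trace ((tpow Y n).1 * (tpow X n).1) = ((hip Y X : ℝ) : ℂ) ^ n := by
    rw [tpow_val, tpow_val, ← tpM_mul, tpM_trace, trace_mul_re]
  rw [trace_mul_re] at h
  exact_mod_cast h


/-! ### The Loewner interval `[-1, 1]` and the trace norm -/

/-- Spectral theorem with the unitary exposed as a plain matrix. -/
theorem spec (Y : HMat ι) : ∃ U : Matrix ι ι ℂ, star U * U = 1 ∧ U * star U = 1 ∧
    Y.1 = U * Matrix.diagonal (fun i => ((herm Y).eigenvalues i : ℂ)) * star U := by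
  refine ⟨(herm Y).eigenvectorUnitary, ?_, ?_, ?_⟩
  · exact Unitary.coe_star_mul_self _
  · exact Unitary.coe_mul_star_self _
  · have := (herm Y).spectral_theorem
    rw [Unitary.conjStarAlgAut_apply] at this
    exact this

theorem loew_conj {U A B : Matrix ι ι ℂ} (h : loew A B) :
    loew (U * A * star U) (U * B * star U) := by
  unfold loew at *
  have := h.mul_mul_conjTranspose_same U
  rwa [mul_sub, sub_mul] at this

theorem loew_diag (a : ι → ℝ) : (loew (-(1 : Matrix ι ι ℂ)) (Matrix.diagonal fun i => (a i : ℂ)) ∧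
    loew (Matrix.diagonal fun i => (a i : ℂ)) 1) ↔ ∀ i, |a i| ≤ 1 := by
  unfold loew
  rw [sub_neg_eq_add, ← Matrix.diagonal_one, Matrix.diagonal_add, Matrix.diagonal_sub,
    Matrix.posSemidef_diagonal_iff, Matrix.posSemidef_diagonal_iff, ← forall_and]
  refine forall_congr' fun i => ?_
  have e1 : (0 : ℂ) ≤ (a i : ℂ) + 1 ↔ 0 ≤ a i + 1 := by norm_cast
  have e2 : (0 : ℂ) ≤ 1 - (a i : ℂ) ↔ 0 ≤ 1 - a i := by norm_cast
  rw [abs_le, e1, e2]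
  constructor <;> rintro ⟨h1, h2⟩ <;> constructor <;> linarith

theorem diag_bound {A : Matrix ι ι ℂ} (h1 : loew (-(1 : Matrix ι ι ℂ)) A) (h2 : loew A 1) (i : ι) :
    |(A i i).re| ≤ 1 := by
  have a := (Complex.le_def.1 (h1.diag_nonneg (i := i))).1
  have b := (Complex.le_def.1 (h2.diag_nonneg (i := i))).1
  simp at a b
  rw [abs_le]
  constructor <;> linarith

/-- Hölder's inequality `|⟨Q, X⟩| ≤ ‖X‖₁` for `-1 ≤ Q ≤ 1`, read off in an eigenbasis of `X`. -/
theorem hip_le_trNorm (Q X : HMat ι) (h1 : loew (-(1 : Matrix ι ι ℂ)) Q.1) (h2 : loew Q.1 1) :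
    |hip Q X| ≤ trNorm X := by
  obtain ⟨U, hU1, hU2, hX⟩ := spec X
  have k1 := loew_conj (U := star U) h1
  have k2 := loew_conj (U := star U) h2
  simp only [star_star, mul_neg, neg_mul, mul_one, hU1] at k1 k2
  have h : hip Q X = ∑ i, ((star U * Q.1 * U) i i).re * (herm X).eigenvalues i := by
    unfold hip
    conv_lhs => rw [hX]
    rw [← mul_assoc, Matrix.trace_mul_comm, ← mul_assoc, ← mul_assoc, Matrix.trace]
    simp [Matrix.mul_diagonal]
  rw [h]
  refine (Finset.abs_sum_le_sum_abs _ _).trans (Finset.sum_le_sum fun i _ => ?_)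
  rw [abs_mul]
  exact mul_le_of_le_one_left (abs_nonneg _) (diag_bound k1 k2 i)

/-- If `-1 ≤ Y ≤ 1` then `-1 ≤ Y^{⊗n} ≤ 1`: in an eigenbasis the entries of `Y^{⊗n}` are products of
eigenvalues of `Y`. -/
theorem loew_tpow {d : ℕ} (Y : HMat (Fin d)) (h1 : loew (-(1 : Matrix _ _ ℂ)) Y.1)
    (h2 : loew Y.1 1) (n : ℕ) :
    loew (-(1 : Matrix _ _ ℂ)) (tpow Y n).1 ∧ loew (tpow Y n).1 1 := by
  obtain ⟨U, hU1, hU2, hY⟩ := spec Y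
  set l := (herm Y).eigenvalues
  have hl : ∀ i, |l i| ≤ 1 := by
    have k1 := loew_conj (U := star U) h1
    have k2 := loew_conj (U := star U) h2
    have e : star U * Y.1 * star (star U) = Matrix.diagonal fun i => (l i : ℂ) := by
      rw [hY, star_star]
      calc _ = (star U * U) * Matrix.diagonal (fun i => (l i : ℂ)) * (star U * U) := by
            simp only [mul_assoc]
        _ = _ := by rw [hU1, one_mul, mul_one]
    rw [e] at k1 k2
    simp only [star_star, mul_neg, neg_mul, mul_one, hU1] at k1 k2
    exact (loew_diag l).1 ⟨k1, k2⟩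
  have hW : tpM U n * star (tpM U n) = 1 := by rw [← tpM_star, ← tpM_mul, hU2, tpM_one]
  have hT : (tpow Y n).1 = tpM U n *
      Matrix.diagonal (fun i => ((∏ k, l (i k) : ℝ) : ℂ)) * star (tpM U n) := by
    rw [tpow_val, hY, tpM_mul, tpM_mul, tpM_star, tpM_diagonal]
    simp
  obtain ⟨k1, k2⟩ := (loew_diag fun i : Fin n → Fin d => ∏ k, l (i k)).2 fun i => by
    rw [Finset.abs_prod]
    exact Finset.prod_le_one (fun _ _ => abs_nonneg _) fun _ _ => hl _
  have m1 := loew_conj (U := tpM U n) k1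
  have m2 := loew_conj (U := tpM U n) k2
  simp only [mul_neg, neg_mul, mul_one, hW] at m1 m2
  rw [hT]
  exact ⟨m1, m2⟩


/-! ### Duality and tests -/

/-- The Hilbert–Schmidt pairing `hip` as a bilinear map. -/
def hipL : HMat ι →ₗ[ℝ] (HMat ι →ₗ[ℝ] ℝ) :=
  LinearMap.mk₂ ℝ hip
    (by intros; simp [hip, add_mul]) (by intros; simp [hip])
    (by intros; simp [hip, mul_add]) (by intros; simp [hip])

instance : FiniteDimensional ℝ (HMat ι) :=
  inferInstanceAs (FiniteDimensional ℝ (selfAdjoint.submodule ℝ (Matrix ι ι ℂ)))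

/-- The defining inequality `⟨Q, X⟩ ≤ ‖Q‖° ‖X‖` of the dual norm. -/
theorem hip_le_dual (ν : MatNorm ι) (Q X : HMat ι) :
    hip Q X ≤ dualNormF ν.toFun Q * ν.toFun X := by
  obtain ⟨c, hc⟩ := exists_bound ν.toFun ν.eq_zero' ν.smul' ν.add_le' (hipL Q)
  obtain ⟨hz, hn'⟩ := norm_fn_nonneg ν.toFun ν.smul' ν.add_le'
  have hn := hn' X
  rcases hn.eq_or_lt with h | h
  · rw [ν.eq_zero' X h.symm, hz, mul_zero]
    exact (map_zero (hipL Q)).le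
  have hb : BddAbove {r | ∃ X, ν.toFun X ≤ 1 ∧ r = hip Q X} := by
    refine ⟨max c 0, ?_⟩
    rintro _ ⟨X, hX, rfl⟩
    have h0 := hn' X
    have h2 : hip Q X ≤ c * ν.toFun X := hc X
    have h3 : c * ν.toFun X ≤ max c 0 * ν.toFun X :=
      mul_le_mul_of_nonneg_right (le_max_left _ _) h0
    have h4 : max c 0 * ν.toFun X ≤ max c 0 * 1 :=
      mul_le_mul_of_nonneg_left hX (le_max_right _ _)
    linarith
  rw [← div_le_iff₀ h]
  refine le_csSup hb ⟨(ν.toFun X)⁻¹ • X, ?_, ?_⟩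
  · rw [ν.smul', abs_of_pos (inv_pos.2 h), inv_mul_cancel₀ h.ne']
  · rw [div_eq_inv_mul]; exact (map_smul (hipL Q) _ X).symm


/-- The feasible operators `Q` in the definition of `D_ħ^0(ρ‖·)`: `-1 ≤ Q ≤ 1` and `⟨Q, ρ⟩ ≥ 1`.
The lower bound is written `1 - 0` to agree with `dhSet` at `ε = 0`. -/
def tests (ρ : HMat ι) : Set (HMat ι) :=
  {Q | loew (-(1 : Matrix ι ι ℂ)) Q.1 ∧ loew Q.1 1 ∧ 1 - 0 ≤ hip Q ρ}

theorem convex_tests (ρ : HMat ι) : Convex ℝ (tests ρ) := by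
  have conv : ∀ {A B : Matrix ι ι ℂ} {a b : ℝ}, A.PosSemidef → B.PosSemidef → 0 ≤ a → 0 ≤ b →
      (a • A + b • B).PosSemidef := fun hA hB ha hb => (hA.smul ha).add (hB.smul hb)
  rintro P ⟨hP1, hP2, hP3⟩ Q ⟨hQ1, hQ2, hQ3⟩ a b ha hb hab
  have hone : (1 : Matrix ι ι ℂ) = a • 1 + b • 1 := by rw [← add_smul, hab, one_smul]
  refine ⟨?_, ?_, ?_⟩
  · have h := conv hP1 hQ1 ha hb
    unfold loew
    convert h using 1
    change a • P.1 + b • Q.1 - -1 = _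
    conv_lhs => rw [hone]
    simp only [smul_sub, smul_neg]
    abel
  · have h := conv hP2 hQ2 ha hb
    unfold loew
    convert h using 1
    change 1 - (a • P.1 + b • Q.1) = _
    conv_lhs => rw [hone]
    simp only [smul_sub]
    abel
  · have h : hip (a • P + b • Q) ρ = a * hip P ρ + b * hip Q ρ := by
      change hipL (a • P + b • Q) ρ = _
      rw [map_add, map_smul, map_smul]
      rfl
    rw [h]
    nlinarith

theorem one_mem_tests (ρ : HMat ι) (hρ : Matrix.trace ρ.1 = 1) : (1 : HMat ι) ∈ tests ρ := by
  refine ⟨?_, ?_, ?_⟩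
  · change Matrix.PosSemidef ((1 : Matrix ι ι ℂ) - -1)
    rw [sub_neg_eq_add]
    exact Matrix.PosSemidef.one.add Matrix.PosSemidef.one
  · change Matrix.PosSemidef ((1 : Matrix ι ι ℂ) - 1)
    rw [sub_self]
    exact Matrix.PosSemidef.zero
  · simp [hip, hρ]

/-- If every test has dual norm at least `2^{-t}`, the minimax step yields a single `Z` of norm at
most one with `⟨Q, Z⟩ ≥ 2^{-t}` for every test `Q`, hence `D_ħ^0(ρ‖Z) ≤ t`. -/
theorem iInf_DEmanc_le (ν : MatNorm ι) (ρ : HMat ι) (hρ : Matrix.trace ρ.1 = 1) (t : ℝ)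
    (h : ∀ Q ∈ tests ρ, (2 : ℝ) ^ (-t) ≤ dualNormF ν.toFun Q) :
    (⨅ Z ∈ {Z : HMat ι | ν.toFun Z ≤ 1}, DEmanc ρ Z 0) ≤ (t : EReal) := by
  have hD : (0 : ℝ) < 2 ^ (-t) := by positivity
  obtain ⟨Z, hZ, hZK⟩ := minimax ν.toFun ν.eq_zero' ν.smul' ν.add_le' (hipL '' tests ρ)
    ((convex_tests ρ).is_linear_image hipL.isLinear) ⟨_, 1, one_mem_tests ρ hρ, rfl⟩ _ hD (by
      rintro _ ⟨Q, hQ, rfl⟩ c hc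
      refine (h Q hQ).trans (csSup_le ⟨hip Q 0, 0, ?_, rfl⟩ ?_)
      · rw [(norm_fn_nonneg ν.toFun ν.smul' ν.add_le').1]
        exact zero_le_one
      · rintro _ ⟨X, hX, rfl⟩
        exact hc X hX)
  obtain ⟨o1, o2, o3⟩ := one_mem_tests ρ hρ
  have hle : (2 : ℝ) ^ (-t) ≤ sInf (dhSet ρ Z 0) := by
    refine le_csInf ⟨_, 1, o1, o2, o3, rfl⟩ ?_
    rintro _ ⟨Q, h1, h2, h3, rfl⟩
    exact hZK _ ⟨Q, ⟨h1, h2, h3⟩, rfl⟩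
  refine (iInf₂_le Z hZ).trans ?_
  rw [DEmanc, if_pos (hD.trans_le hle), EReal.coe_le_coe_iff, neg_le,
    Real.le_logb_iff_rpow_le one_lt_two (hD.trans_le hle)]
  exact hle

/-! ### The asymptotic bound -/

/-- Operators on one copy, indexed by `Fin 1 → Fin d`, are first tensor powers. -/
theorem exists_tpow_one {d : ℕ} (Q : HMat (Fin 1 → Fin d)) :
    ∃ Y : HMat (Fin d), tpow Y 1 = Q := by
  refine ⟨⟨Q.1.submatrix (fun i _ => i) (fun i _ => i), ?_⟩, ?_⟩
  · exact ((herm Q).submatrix _).isSelfAdjoint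
  · apply Subtype.ext
    ext i j
    simp only [tpow, Matrix.of_apply, Matrix.submatrix_apply, Fin.prod_univ_one]
    have hc : ∀ u : Fin 1 → Fin d, (fun _ => u 0) = u := fun u =>
      funext fun k => by rw [Subsingleton.elim k 0]
    rw [hc, hc]

theorem of_mem_tests_tpow_one {d : ℕ} {Y ρ : HMat (Fin d)} (h : tpow Y 1 ∈ tests (tpow ρ 1)) :
    loew (-(1 : Matrix _ _ ℂ)) Y.1 ∧ loew Y.1 1 ∧ 1 ≤ hip Y ρ := by
  obtain ⟨h1, h2, h3⟩ := h
  rw [hip_tpow, pow_one, sub_zero] at h3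
  have e : (tpow Y 1).1.submatrix (fun i _ => i) (fun i _ => i) = Y.1 := by
    ext i j
    simp [tpow]
  have hinj : Function.Injective (fun (i : Fin d) (_ : Fin 1) => i) :=
    fun i j hij => congrFun hij 0
  refine ⟨?_, ?_, h3⟩
  · have := h1.submatrix (fun (i : Fin d) (_ : Fin 1) => i)
    rw [sub_neg_eq_add, Matrix.submatrix_add, Pi.add_apply, Pi.add_apply, e, Matrix.submatrix_one _ hinj] at this
    rw [loew, sub_neg_eq_add]
    exact this
  · have := h2.submatrix (fun (i : Fin d) (_ : Fin 1) => i)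
    rwa [Matrix.submatrix_sub, Pi.sub_apply, Pi.sub_apply, e, Matrix.submatrix_one _ hinj] at this

/-- Testing `X ≈ ρ^{⊗n}` with `Y^{⊗n}`: the value is at least `⟨Y, ρ⟩^n - ‖X - ρ^{⊗n}‖₁` by Hölder and
at most `‖Y^{⊗n}‖° ‖X‖ ≤ (‖Y‖°)^n ‖X‖` by duality. -/
theorem one_sub_le {d : ℕ} (ν : MatNorm (Fin 1 → Fin d)) (n : ℕ) (νn : MatNorm (Fin n → Fin d))
    (Y ρ : HMat (Fin d)) (hY : tpow Y 1 ∈ tests (tpow ρ 1))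
    (hd : dualNormF νn.toFun (tpow Y n) ≤ dualNormF ν.toFun (tpow Y 1) ^ n)
    (X : HMat (Fin n → Fin d)) :
    1 - trNorm (X - tpow ρ n) ≤ dualNormF ν.toFun (tpow Y 1) ^ n * νn.toFun X := by
  obtain ⟨h1, h2, h3⟩ := of_mem_tests_tpow_one hY
  obtain ⟨k1, k2⟩ := loew_tpow Y h1 h2 n
  have a1 : 1 ≤ hip (tpow Y n) (tpow ρ n) := by
    rw [hip_tpow]; exact one_le_pow₀ h3
  have a2 := (abs_le.1 (hip_le_trNorm (tpow Y n) (X - tpow ρ n) k1 k2)).1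
  have a3 : hip (tpow Y n) (X - tpow ρ n) = hip (tpow Y n) X - hip (tpow Y n) (tpow ρ n) :=
    map_sub (hipL (tpow Y n)) _ _
  have a4 := hip_le_dual νn (tpow Y n) X
  have a5 := mul_le_mul_of_nonneg_right hd
    ((norm_fn_nonneg νn.toFun νn.smul' νn.add_le').2 X)
  linarith

/-- The one-shot bounds `1 - δₙ ≤ qⁿ N(⌈Cn⌉)` with `δₙ → 0` pass to the limit along `m = ⌈Cn⌉`:
there `log₂ N(m) ≥ -n log₂ q - 1` eventually, and `n / m → 1 / C`. -/
theorem rate_bound (C : ℝ) (hC : 0 < C) (q : ℝ) (hq : 0 < q) (N : ℕ → ℝ) (δ : ℕ → ℝ)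
    (hδ : Tendsto (fun n => (1 / 2) * δ n) atTop (nhds 0))
    (h : ∀ n, 1 ≤ n → 1 - δ n ≤ q ^ n * N ⌈C * (n : ℝ)⌉₊) :
    ((-Real.logb 2 q : ℝ) : EReal) ≤ (C : EReal) *
      Filter.limsup (fun m : ℕ => (((m : ℝ)⁻¹ * Real.logb 2 (N m) : ℝ) : EReal)) atTop := by
  set a := -Real.logb 2 q with ha
  have hsub : Tendsto (fun n : ℕ => ⌈C * (n : ℝ)⌉₊) atTop atTop :=
    tendsto_nat_ceil_atTop.comp (tendsto_natCast_atTop_atTop.const_mul_atTop hC)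
  have hlow : ∀ᶠ n : ℕ in atTop, ((⌈C * (n : ℝ)⌉₊ : ℝ)⁻¹ * (n * a - 1) : ℝ) ≤
      (⌈C * (n : ℝ)⌉₊ : ℝ)⁻¹ * Real.logb 2 (N ⌈C * (n : ℝ)⌉₊) := by
    filter_upwards [hδ.eventually_lt_const (show (0 : ℝ) < 1 / 4 by norm_num),
      eventually_ge_atTop 1] with n hn1 hn2
    refine mul_le_mul_of_nonneg_left ?_ (by positivity)
    have h1 : 1 / 2 ≤ q ^ n * N ⌈C * (n : ℝ)⌉₊ := by linarith [h n hn2]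
    have hqn : 0 < q ^ n := by positivity
    have hN : 0 < N ⌈C * (n : ℝ)⌉₊ := pos_of_mul_pos_right (by linarith) hqn.le
    have h2 := Real.logb_le_logb_of_le one_lt_two (by norm_num) h1
    rw [Real.logb_mul hqn.ne' hN.ne', Real.logb_pow, one_div, Real.logb_inv,
      Real.logb_self_eq_one one_lt_two] at h2
    rw [ha]
    linarith
  have hlim : Tendsto (fun n : ℕ => (⌈C * (n : ℝ)⌉₊ : ℝ)⁻¹ * (n * a - 1)) atTop
      (nhds (C⁻¹ * a)) := by
    have h1 : Tendsto (fun n : ℕ => (⌈C * (n : ℝ)⌉₊ : ℝ) / n) atTop (nhds C) :=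
      (tendsto_nat_ceil_mul_div_atTop hC.le).comp tendsto_natCast_atTop_atTop
    have h2 : Tendsto (fun n : ℕ => a - ((n : ℝ))⁻¹) atTop (nhds (a - 0)) :=
      tendsto_const_nhds.sub tendsto_inv_atTop_nhds_zero_nat
    rw [sub_zero] at h2
    refine ((h1.inv₀ hC.ne').mul h2).congr' ?_
    filter_upwards [eventually_ge_atTop 1] with n hn
    have : (n : ℝ) ≠ 0 := by positivity
    field_simp
  -- a limsup along the subsequence `⌈C n⌉` is at most the full limsup
  have hls : ((C⁻¹ * a : ℝ) : EReal) ≤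
      Filter.limsup (fun m : ℕ => (((m : ℝ)⁻¹ * Real.logb 2 (N m) : ℝ) : EReal)) atTop := by
    rw [← ((continuous_coe_real_ereal.tendsto _).comp hlim).limsup_eq]
    refine le_trans ?_ (Filter.limsup_le_limsup_of_le hsub)
    change _ ≤ Filter.limsup ((fun m : ℕ => (((m : ℝ)⁻¹ * Real.logb 2 (N m) : ℝ) : EReal)) ∘
      fun n : ℕ => ⌈C * (n : ℝ)⌉₊) atTop
    refine Filter.limsup_le_limsup ?_
    filter_upwards [hlow] with n hn
    exact EReal.coe_le_coe_iff.2 hn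
  calc ((a : ℝ) : EReal) = (C : EReal) * ((C⁻¹ * a : ℝ) : EReal) := by
        rw [← EReal.coe_mul, mul_inv_cancel_left₀ hC.ne']
    _ ≤ _ := mul_le_mul_of_nonneg_left hls (EReal.coe_nonneg.2 hC.le)

/-- **Corollary (single-letter cost bound).**
If additionally `‖Y^{⊗n}‖_μ° ≤ (‖Y‖_μ°)^n`, then any achievable dilution rate `C` satisfies
`C · limsup (1/m) log₂ ‖φ^{⊗m}‖_μ ≥ inf {D_ħ^0(ρ‖Z) : ‖Z‖_μ ≤ 1}` (single-copy quantity). -/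
theorem single_letter_cost_bound
    {dA dB : ℕ}
    (νA : (n : ℕ) → ResourceNorm (Fin n → Fin dA))
    (νB : (n : ℕ) → ResourceNorm (Fin n → Fin dB))
    (hdual : ∀ (Y : HMat (Fin dA)) (n : ℕ), 1 ≤ n →
      dualNormF (νA n).toFun (tpow Y n) ≤ (dualNormF (νA 1).toFun (tpow Y 1)) ^ n)
    (ρ : HMat (Fin dA)) (hρ : IsState ρ)
    (φ : HMat (Fin dB)) (hφ : IsPureState φ)
    (C : ℝ) (hC : 0 < C)
    (Λ : (n : ℕ) → (HMat (Fin ⌈C * (n : ℝ)⌉₊ → Fin dB) →ₗ[ℝ] HMat (Fin n → Fin dA)))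
    (hΛtr : ∀ n X, trNorm ((Λ n) X) ≤ trNorm X)
    (hΛμ : ∀ n X, (νA n).toFun ((Λ n) X) ≤ (νB ⌈C * (n : ℝ)⌉₊).toFun X)
    (hconv : Tendsto
      (fun n : ℕ => (1 / 2) * trNorm ((Λ n) (tpow φ ⌈C * (n : ℝ)⌉₊) - tpow ρ n))
      atTop (nhds 0)) :
    (⨅ Z ∈ {Z : HMat (Fin 1 → Fin dA) | (νA 1).toFun Z ≤ 1}, DEmanc (tpow ρ 1) Z 0) ≤
      ((C : ℝ) : EReal) *
        Filter.limsup
          (fun m : ℕ => (((m : ℝ)⁻¹ * Real.logb 2 ((νB m).toFun (tpow φ m)) : ℝ) : EReal))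
          atTop := by
  have htr : Matrix.trace (tpow ρ 1).1 = 1 := by
    rw [tpow_val, tpM_trace, hρ.2, one_pow]
  -- every test `Q` bounds the regularised resource content of `φ` from below
  have key : ∀ Q ∈ tests (tpow ρ 1), 0 < dualNormF (νA 1).toFun Q ∧
      ((-Real.logb 2 (dualNormF (νA 1).toFun Q) : ℝ) : EReal) ≤ (C : EReal) *
        Filter.limsup
          (fun m : ℕ => (((m : ℝ)⁻¹ * Real.logb 2 ((νB m).toFun (tpow φ m)) : ℝ) : EReal))
          atTop := by
    intro Q hQ
    obtain ⟨Y, rfl⟩ := exists_tpow_one Q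
    have hq : 0 < dualNormF (νA 1).toFun (tpow Y 1) := by
      have h1 := hip_le_dual (νA 1).toMatNorm (tpow Y 1) (tpow ρ 1)
      have h2 := hQ.2.2
      exact pos_of_mul_pos_left (by linarith)
        ((norm_fn_nonneg (νA 1).toFun (νA 1).smul' (νA 1).add_le').2 (tpow ρ 1))
    refine ⟨hq, rate_bound C hC _ hq _ _ hconv fun n hn => ?_⟩
    refine (one_sub_le (νA 1).toMatNorm n (νA n).toMatNorm Y ρ hQ (hdual Y n hn) _).trans ?_
    exact mul_le_mul_of_nonneg_left (hΛμ n _) (by positivity)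
  generalize ((C : ℝ) : EReal) * Filter.limsup
    (fun m : ℕ => (((m : ℝ)⁻¹ * Real.logb 2 ((νB m).toFun (tpow φ m)) : ℝ) : EReal))
    atTop = T at key ⊢
  induction T with
  -- the identity is a test, so `key` excludes `⊥`
  | bot => exact absurd (key 1 (one_mem_tests _ htr)).2 (by simp)
  | top => exact le_top
  | coe t =>
    refine iInf_DEmanc_le (νA 1).toMatNorm (tpow ρ 1) htr t fun Q hQ => ?_
    obtain ⟨hq, h⟩ := key Q hQ
    rw [EReal.coe_le_coe_iff, neg_le, Real.le_logb_iff_rpow_le one_lt_two hq] at h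
    exact h
end
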